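/- Let q ≡ 1 (mod 4) be a prime power and let a ∈ F_q be such that a ≠ −1, 0, 1, the elements a, a+1, a³−a−1 are squares in F_q, and the elements a−1, a²+1, a²−a−1, a²+a+1, a²+a−1 are non-squares in F_q. Write L := L_{a,a²}. Then no triple of the form (0, 1, z) is associative: for every z ∈ F_q, L(L(0,1), z) ≠ L(0, L(1,z)). -/

import Mathlib

open scoped Classical

/-!
Since `L 0 1 = a`, the triple `(0, 1, z)` is associative iff `L a z = L 0 w` with `w = L 1 z`.
Fixing which of `z - a`, `z - 1` and `w` are squares turns this into a linear equation for `z`.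
In one of the eight cases it has no solution; in the others its solution makes `z - a`, `z - 1` or
`w` an explicit rational function of `a` whose quadratic character, known from the hypotheses on
`a`, contradicts the case.
-/

section Squares

theorem isSquare_neg_of_isSquare_neg_one {M : Type*} [CommMonoid M] [HasDistribNeg M] {x : M}
    (hneg : IsSquare (-1 : M)) (hx : IsSquare x) : IsSquare (-x) :=
  neg_one_mul x ▸ hneg.mul hx

theorem isSquare_div_of_isSquare_mul {G : Type*} [CommGroupWithZero G] {x y : G}
    (h : IsSquare (x * y)) : IsSquare (x / y) := by
  have : x / y = x * y / y ^ 2 := by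
    rcases eq_or_ne y 0 with rfl | hy
    · simp
    · field_simp
  exact this ▸ h.div (.sq y)

theorem isSquare_mul_of_not_isSquare {F : Type*} [Field F] [Finite F] {x y : F}
    (hx : ¬ IsSquare x) (hy : ¬ IsSquare y) : IsSquare (x * y) := by
  have := Fintype.ofFinite F
  have hxy : x * y ≠ 0 :=
    mul_ne_zero (by rintro rfl; exact hx .zero) (by rintro rfl; exact hy .zero)
  rw [← quadraticChar_one_iff_isSquare hxy, map_mul,
    quadraticChar_neg_one_iff_not_isSquare.2 hx, quadraticChar_neg_one_iff_not_isSquare.2 hy,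
    neg_one_mul, neg_neg]

end Squares

/-- `(x, y, z)` is an associative triple of the binary operation `op`; unlike `Std.Associative`,
this concerns a single triple. -/
def AssociativeTriple {α : Type*} (op : α → α → α) (x y z : α) : Prop :=
  op (op x y) z = op x (op y z)

section QuadraticOp

variable {F : Type*} [Field F] {a b x y z : F}

/-- The operation `L_{a,b}`, which moves `x` towards `y` by the factor `a` or `b` according to
whether `y - x` is a square (`0` included) or a non-square. -/
noncomputable def quadraticOp (a b x y : F) : F :=
  if IsSquare (y - x) then x + a * (y - x) else x + b * (y - x)

theorem quadraticOp_of_isSquare (h : IsSquare (y - x)) :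
    quadraticOp a b x y = x + a * (y - x) :=
  if_pos h

theorem quadraticOp_of_not_isSquare (h : ¬ IsSquare (y - x)) :
    quadraticOp a b x y = x + b * (y - x) :=
  if_neg h

theorem quadraticOp_zero_of_isSquare (h : IsSquare y) : quadraticOp a b 0 y = a * y := by
  rw [quadraticOp_of_isSquare (by rwa [sub_zero]), sub_zero, zero_add]

theorem quadraticOp_zero_of_not_isSquare (h : ¬ IsSquare y) : quadraticOp a b 0 y = b * y := by
  rw [quadraticOp_of_not_isSquare (by rwa [sub_zero]), sub_zero, zero_add]

theorem associativeTriple_quadraticOp_zero_one_iff :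
    AssociativeTriple (quadraticOp a b) 0 1 z ↔
      quadraticOp a b a z = quadraticOp a b 0 (quadraticOp a b 1 z) := by
  rw [AssociativeTriple, quadraticOp_zero_of_isSquare IsSquare.one, mul_one]

theorem not_associativeTriple_quadraticOp_of_isSquare_sub_of_isSquare_sub_one
    (hneg : IsSquare (-1 : F)) (ha_add : IsSquare (a + 1)) (ha_sub : ¬ IsSquare (a - 1))
    (ha_sq : ¬ IsSquare (a ^ 2 + 1)) (ha_ne_zero : a ≠ 0) (ha_ne_one : a ≠ 1)
    (hza : IsSquare (z - a)) (hz1 : IsSquare (z - 1)) :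
    ¬ AssociativeTriple (quadraticOp a (a ^ 2)) 0 1 z := by
  rw [associativeTriple_quadraticOp_zero_one_iff, quadraticOp_of_isSquare hza,
    quadraticOp_of_isSquare hz1]
  intro h
  by_cases hw : IsSquare (1 + a * (z - 1))
  · rw [quadraticOp_zero_of_isSquare hw] at h
    have hz : z = 0 := by grind
    have : a - 1 = -(1 + a * (z - 1)) := by rw [hz]; ring
    exact ha_sub (this ▸ isSquare_neg_of_isSquare_neg_one hneg hw)
  · rw [quadraticOp_zero_of_not_isSquare hw] at h
    have hz : z * (a + 1) = a - 1 := by grind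
    have : a ^ 2 + 1 = -((z - a) * (a + 1)) := by linear_combination hz
    exact ha_sq (this ▸ isSquare_neg_of_isSquare_neg_one hneg (hza.mul ha_add))

theorem not_associativeTriple_quadraticOp_of_isSquare_sub_of_not_isSquare_sub_one
    (hneg : IsSquare (-1 : F)) (ha_add : IsSquare (a + 1))
    (ha_mul : IsSquare ((a ^ 2 - a - 1) * (a ^ 2 + a + 1))) (ha_cyc : a ^ 2 + a + 1 ≠ 0)
    (ha_ne_zero : a ≠ 0) (ha_ne_one : a ≠ 1)
    (hza : IsSquare (z - a)) (hz1 : ¬ IsSquare (z - 1)) :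
    ¬ AssociativeTriple (quadraticOp a (a ^ 2)) 0 1 z := by
  rw [associativeTriple_quadraticOp_zero_one_iff, quadraticOp_of_isSquare hza,
    quadraticOp_of_not_isSquare hz1]
  intro h
  by_cases hw : IsSquare (1 + a ^ 2 * (z - 1))
  · rw [quadraticOp_zero_of_isSquare hw] at h
    have hz : z * (a + 1) = a := by grind
    have : z - 1 = -1 / (a + 1) := by grind
    exact hz1 (this ▸ hneg.div ha_add)
  · rw [quadraticOp_zero_of_not_isSquare hw] at h
    have hz : z * (a ^ 2 + a + 1) = a ^ 2 + a - 1 := by grind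
    have : 1 + a ^ 2 * (z - 1) = -((a ^ 2 - a - 1) / (a ^ 2 + a + 1)) := by grind
    exact hw (this ▸ isSquare_neg_of_isSquare_neg_one hneg (isSquare_div_of_isSquare_mul ha_mul))

theorem not_associativeTriple_quadraticOp_of_not_isSquare_sub_of_isSquare_sub_one
    (hneg : IsSquare (-1 : F)) (ha : IsSquare a) (ha_ne_zero : a ≠ 0) (ha_ne_one : a ≠ 1)
    (hza : ¬ IsSquare (z - a)) (hz1 : IsSquare (z - 1)) :
    ¬ AssociativeTriple (quadraticOp a (a ^ 2)) 0 1 z := by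
  rw [associativeTriple_quadraticOp_zero_one_iff, quadraticOp_of_not_isSquare hza,
    quadraticOp_of_isSquare hz1]
  intro h
  by_cases hw : IsSquare (1 + a * (z - 1))
  · rw [quadraticOp_zero_of_isSquare hw] at h
    have : a ^ 2 * (a - 1) = 0 := by linear_combination -h
    exact mul_ne_zero (pow_ne_zero 2 ha_ne_zero) (sub_ne_zero.2 ha_ne_one) this
  · rw [quadraticOp_zero_of_not_isSquare hw] at h
    have hz : z * a = -1 := by grind
    have : 1 + a * (z - 1) = -a := by linear_combination hz
    exact hw (this ▸ isSquare_neg_of_isSquare_neg_one hneg ha)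

theorem not_associativeTriple_quadraticOp_of_not_isSquare_sub_of_not_isSquare_sub_one
    (hneg : IsSquare (-1 : F)) (ha : IsSquare a) (ha_ne_neg_one : a ≠ -1)
    (ha_ne_zero : a ≠ 0) (ha_ne_one : a ≠ 1)
    (hza : ¬ IsSquare (z - a)) (hz1 : ¬ IsSquare (z - 1)) :
    ¬ AssociativeTriple (quadraticOp a (a ^ 2)) 0 1 z := by
  rw [associativeTriple_quadraticOp_zero_one_iff, quadraticOp_of_not_isSquare hza,
    quadraticOp_of_not_isSquare hz1]
  intro h
  by_cases hw : IsSquare (1 + a ^ 2 * (z - 1))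
  · rw [quadraticOp_zero_of_isSquare hw] at h
    have hz : z = 0 := by grind
    have : z - 1 = -1 := by rw [hz, zero_sub]
    exact hz1 (this ▸ hneg)
  · rw [quadraticOp_zero_of_not_isSquare hw] at h
    have hz : z * a = a - 1 := by grind
    have : z - 1 = -1 / a := by grind
    exact hz1 (this ▸ hneg.div ha)

theorem Laa2_no_assoc_01z_q1mod4_general (hneg : IsSquare (-1 : F)) (ha_ne_neg_one : a ≠ -1)
    (ha : IsSquare a) (ha_add : IsSquare (a + 1)) (ha_sub : ¬ IsSquare (a - 1))
    (ha_sq : ¬ IsSquare (a ^ 2 + 1)) (ha_mul : IsSquare ((a ^ 2 - a - 1) * (a ^ 2 + a + 1)))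
    (z : F) : ¬ AssociativeTriple (quadraticOp a (a ^ 2)) 0 1 z := by
  have ha_ne_zero : a ≠ 0 := by
    rintro rfl
    exact ha_sub (by rwa [zero_sub])
  have ha_ne_one : a ≠ 1 := by
    rintro rfl
    exact ha_sub (by rw [sub_self]; exact .zero)
  have ha_cyc : a ^ 2 + a + 1 ≠ 0 := fun h ↦ by
    have : a ^ 2 + 1 = -a := by linear_combination h
    exact ha_sq (this ▸ isSquare_neg_of_isSquare_neg_one hneg ha)
  by_cases hza : IsSquare (z - a) <;> by_cases hz1 : IsSquare (z - 1)
  · exact not_associativeTriple_quadraticOp_of_isSquare_sub_of_isSquare_sub_one hneg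
      ha_add ha_sub ha_sq ha_ne_zero ha_ne_one hza hz1
  · exact not_associativeTriple_quadraticOp_of_isSquare_sub_of_not_isSquare_sub_one hneg
      ha_add ha_mul ha_cyc ha_ne_zero ha_ne_one hza hz1
  · exact not_associativeTriple_quadraticOp_of_not_isSquare_sub_of_isSquare_sub_one hneg
      ha ha_ne_zero ha_ne_one hza hz1
  · exact not_associativeTriple_quadraticOp_of_not_isSquare_sub_of_not_isSquare_sub_one hneg
      ha ha_ne_neg_one ha_ne_zero ha_ne_one hza hz1

end QuadraticOp

/-- Case `q ≡ 1 (mod 4)`: no triple `(0, 1, z)` is associative for `L_{a,a²}`. -/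
theorem Laa2_no_assoc_01z_q1mod4 (F : Type*) [Field F] [Fintype F]
    (q : ℕ) (hq : Fintype.card F = q) (h4 : q % 4 = 1)
    (a : F) (ha1 : a ≠ -1) (ha2 : a ≠ 0) (ha3 : a ≠ 1)
    (hs1 : IsSquare a) (hs2 : IsSquare (a + 1)) (hs3 : IsSquare (a ^ 3 - a - 1))
    (hn1 : ¬ IsSquare (a - 1)) (hn2 : ¬ IsSquare (a ^ 2 + 1))
    (hn3 : ¬ IsSquare (a ^ 2 - a - 1)) (hn4 : ¬ IsSquare (a ^ 2 + a + 1))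
    (hn5 : ¬ IsSquare (a ^ 2 + a - 1))
    (L : F → F → F)
    (hL : ∀ x y : F,
      L x y = if IsSquare (y - x) then x + a * (y - x) else x + a ^ 2 * (y - x)) :
    ∀ z : F, L (L 0 1) z ≠ L 0 (L 1 z) := by
  obtain rfl : L = quadraticOp a (a ^ 2) := by
    ext x y
    rw [hL, quadraticOp]
    congr
  exact Laa2_no_assoc_01z_q1mod4_general (FiniteField.isSquare_neg_one_iff.2 (by omega))
    ha1 hs1 hs2 hn1 hn2 (isSquare_mul_of_not_isSquare hn3 hn4)
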